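/- Let L be a finite modular semilattice and B a (∧,∨)-closed subset of L^n. Suppose the bases e^i_a, e^j_b, e^k_c exist, each is a ∨-irreducible element of B, and they are pairwise consistent (each of the joins e^i_a ∨ e^j_b, e^j_b ∨ e^k_c, e^k_c ∨ e^i_a exists in B). Then the following are equivalent: (i) the triple (e^i_a, e^j_b, e^k_c) is collinear in B; (ii) the triple (a, e^j_b[i], e^k_c[i]) is collinear in π_i(B), the triple (e^i_a[j], b, e^k_c[j]) is collinear in π_j(B), and the triple (e^i_a[k], e^j_b[k], c) is collinear in π_k(B). -/

import Mathlib

/-- The join of `a` and `b` exists (there is a least upper bound of the pair). -/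
def JoinExists {α : Type*} [Preorder α] (a b : α) : Prop :=
  ∃ j, IsLUB ({a, b} : Set α) j

/-- `a` and `b` are incomparable. -/
def Incomp {α : Type*} [Preorder α] (a b : α) : Prop :=
  ¬ a ≤ b ∧ ¬ b ≤ a

/-- A collinear triple: pairwise incomparable elements whose pairwise joins all exist
and coincide. -/
def Collinear3 {α : Type*} [Preorder α] (x y z : α) : Prop :=
  Incomp x y ∧ Incomp y z ∧ Incomp z x ∧
  ∃ j, IsLUB ({x, y} : Set α) j ∧ IsLUB ({y, z} : Set α) j ∧ IsLUB ({z, x} : Set α) j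

/-- `l` is ∨-irreducible: `l` is not the minimum element, and whenever `l` is the join
of `a` and `b`, `l = a` or `l = b`. -/
def JoinIrred {α : Type*} [Preorder α] (l : α) : Prop :=
  (¬ ∀ x, l ≤ x) ∧ ∀ a b, IsLUB ({a, b} : Set α) l → l = a ∨ l = b

/-- A modular semilattice: (existing joins witness that) every principal ideal is a
(modular) lattice, the modular law holds in every principal ideal, and the join of any
three elements exists whenever the three pairwise joins exist. -/
def ModularSemilattice (α : Type*) [SemilatticeInf α] : Prop :=
  (∀ a b : α, (∃ u, a ≤ u ∧ b ≤ u) → JoinExists a b) ∧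
  (∀ x a b c : α, a ≤ x → b ≤ x → c ≤ x → a ≤ c →
    ∀ j, IsLUB ({a, b} : Set α) j → IsLUB ({a, b ⊓ c} : Set α) (j ⊓ c)) ∧
  (∀ x y z : α, JoinExists x y → JoinExists y z → JoinExists z x →
    ∃ j, IsLUB ({x, y, z} : Set α) j)
/-- `j` is the least upper bound of `a` and `b` within the subset `B`. -/
def IsLUBwithin {α : Type*} [Preorder α] (B : Set α) (a b j : α) : Prop :=
  j ∈ B ∧ a ≤ j ∧ b ≤ j ∧ ∀ u ∈ B, a ≤ u → b ≤ u → j ≤ u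

/-- The join of `a` and `b` exists in the semilattice `B`. -/
def JoinExistsIn {α : Type*} [Preorder α] (B : Set α) (a b : α) : Prop :=
  ∃ j, IsLUBwithin B a b j

/-- `l` is a ∨-irreducible element of the semilattice `B`: `l ∈ B`, `l` is not the
minimum element of `B`, and whenever `l` is the join (within `B`) of `a, b ∈ B`,
`l = a` or `l = b`. -/
def JoinIrredIn {α : Type*} [Preorder α] (B : Set α) (l : α) : Prop :=
  l ∈ B ∧ (¬ ∀ x ∈ B, l ≤ x) ∧
  ∀ a b, a ∈ B → b ∈ B → IsLUBwithin B a b l → l = a ∨ l = b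

/-- `B` is (∧,∨)-closed: closed under meets and under those joins that exist. -/
def WedgeVeeClosed {α : Type*} [SemilatticeInf α] (B : Set α) : Prop :=
  (∀ a ∈ B, ∀ b ∈ B, a ⊓ b ∈ B) ∧
  (∀ a ∈ B, ∀ b ∈ B, ∀ j, IsLUB ({a, b} : Set α) j → j ∈ B)

/-- A collinear triple in the semilattice `B`: pairwise incomparable, all pairwise
joins exist in `B` and coincide. -/
def CollinearIn {α : Type*} [Preorder α] (B : Set α) (x y z : α) : Prop :=
  Incomp x y ∧ Incomp y z ∧ Incomp z x ∧
  ∃ j, IsLUBwithin B x y j ∧ IsLUBwithin B y z j ∧ IsLUBwithin B z x j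

/-!
A base lies below exactly those elements of `B` whose component at its coordinate dominates its
own, so comparing a base with elements of `B` amounts to comparing components at that coordinate.
Existing joins are componentwise, so a collinear triple projects to a triple with a common pairwise
join. The component of a ∨-irreducible base is again ∨-irreducible in the projection, hence not the
join of the other two components, and this gives incomparability. Conversely, collinearity of the
three projections puts each base below the join of the other two, so the three joins coincide.
-/

section Preorder

variable {α : Type*} [Preorder α] {B : Set α} {x y z m m' m'' : α}

theorem isLUB_pair_iff : IsLUB {x, y} m ↔ x ≤ m ∧ y ≤ m ∧ ∀ u, x ≤ u → y ≤ u → m ≤ u := by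
  simp [IsLUB, IsLeast, upperBounds, lowerBounds, and_assoc]

theorem IsLUBwithin.symm (h : IsLUBwithin B x y m) : IsLUBwithin B y x m :=
  ⟨h.1, h.2.2.1, h.2.1, fun u hu hy hx => h.2.2.2 u hu hx hy⟩

theorem IsLUBwithin.exchange (hxy : IsLUBwithin B x y m) (hyz : IsLUBwithin B y z m')
    (hz : z ≤ m) (hx : x ≤ m') : IsLUBwithin B y z m :=
  ⟨hxy.1, hxy.2.2.1, hz,
    fun u hu hyu hzu => hxy.2.2.2 u hu (hx.trans (hyz.2.2.2 u hu hyu hzu)) hyu⟩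

theorem IsLUBwithin.incomp (h : IsLUBwithin B x y m) (hx : x ∈ B) (hy : y ∈ B)
    (hmx : ¬ m ≤ x) (hmy : ¬ m ≤ y) : Incomp x y :=
  ⟨fun hxy => hmy (h.2.2.2 y hy hxy le_rfl), fun hyx => hmx (h.2.2.2 x hx le_rfl hyx)⟩

theorem CollinearIn.rotate (h : CollinearIn B x y z) : CollinearIn B y z x :=
  let ⟨hxy, hyz, hzx, m, mxy, myz, mzx⟩ := h
  ⟨hyz, hzx, hxy, m, myz, mzx, mxy⟩

theorem collinearIn_of_le_isLUBwithin (hxy : Incomp x y) (hyz : Incomp y z) (hzx : Incomp z x)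
    (mxy : IsLUBwithin B x y m) (myz : IsLUBwithin B y z m') (mzx : IsLUBwithin B z x m'')
    (hx : x ≤ m') (hy : y ≤ m'') (hz : z ≤ m) : CollinearIn B x y z :=
  ⟨hxy, hyz, hzx, m, mxy, mxy.exchange myz hz hx, (mxy.symm.exchange mzx.symm hz hy).symm⟩

end Preorder

/-- Any two elements with a common upper bound have a join. This is the part of the definition of a
modular semilattice that makes joins in a product, and in its closed subsets, componentwise. -/
def HasBoundedJoins (α : Type*) [Preorder α] : Prop :=
  ∀ x y : α, (∃ u, x ≤ u ∧ y ≤ u) → JoinExists x y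

theorem HasBoundedJoins.pi {ι : Type*} {L : ι → Type*} [∀ t, Preorder (L t)]
    (hL : ∀ t, HasBoundedJoins (L t)) : HasBoundedJoins (∀ t, L t) := by
  rintro x y ⟨u, hxu, hyu⟩
  choose m hm using fun t => hL t (x t) (y t) ⟨u t, hxu t, hyu t⟩
  exact ⟨m, isLUB_pi.2 fun t => by simpa only [Set.image_pair] using hm t⟩

section Closed

variable {α : Type*} [SemilatticeInf α] {B : Set α} {x y u m : α}

theorem WedgeVeeClosed.exists_isLUB_of_le (hB : WedgeVeeClosed B) (hα : HasBoundedJoins α)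
    (hx : x ∈ B) (hy : y ∈ B) (hxu : x ≤ u) (hyu : y ≤ u) : ∃ j ∈ B, IsLUB {x, y} j :=
  let ⟨j, hj⟩ := hα x y ⟨u, hxu, hyu⟩
  ⟨j, hB.2 x hx y hy j hj, hj⟩

theorem IsLUBwithin.isLUB (h : IsLUBwithin B x y m) (hα : HasBoundedJoins α)
    (hB : WedgeVeeClosed B) (hx : x ∈ B) (hy : y ∈ B) : IsLUB {x, y} m := by
  obtain ⟨j, hjB, hj⟩ := hB.exists_isLUB_of_le hα hx hy h.2.1 h.2.2.1
  obtain ⟨hxj, hyj, hj_le⟩ := isLUB_pair_iff.1 hj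
  have hmj : m ≤ j := h.2.2.2 j hjB hxj hyj
  exact isLUB_pair_iff.2 ⟨h.2.1, h.2.2.1, fun u hxu hyu => hmj.trans (hj_le u hxu hyu)⟩

end Closed

section Pi

variable {ι : Type*} {L : ι → Type*}

/-- `e` is the base `e^i_a` of `B`: the least element of `B` whose `i`-th component is `a`. As a
relation, it also records that the base exists. -/
def IsBase [∀ t, Preorder (L t)] (B : Set (∀ t, L t)) (i : ι) (a : L i) (e : ∀ t, L t) : Prop :=
  IsLeast {x | x ∈ B ∧ x i = a} e

theorem IsBase.not_le_of_collinearIn_image_eval [∀ t, Preorder (L t)] {B : Set (∀ t, L t)}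
    {i : ι} {a : L i} {p q r : ∀ t, L t} (hp : IsBase B i a p)
    (h : CollinearIn (Function.eval i '' B) a (q i) (r i)) : ¬ p ≤ q ∧ ¬ p ≤ r :=
  let ⟨⟨haq, _⟩, _, ⟨_, har⟩, _⟩ := h
  ⟨fun hpq => haq (hp.1.2 ▸ hpq i), fun hpr => har (hp.1.2 ▸ hpr i)⟩

variable [∀ t, SemilatticeInf (L t)] {B : Set (∀ t, L t)} {i : ι} {a : L i}
  {p q r m : ∀ t, L t}

theorem IsLUBwithin.image_eval (h : IsLUBwithin B q r m) (hL : ∀ t, HasBoundedJoins (L t))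
    (hB : WedgeVeeClosed B) (hq : q ∈ B) (hr : r ∈ B) (i : ι) :
    IsLUBwithin (Function.eval i '' B) (q i) (r i) (m i) := by
  have hi : IsLUB {q i, r i} (m i) := by
    simpa only [Set.image_pair] using isLUB_pi.1 (h.isLUB (.pi hL) hB hq hr) i
  exact ⟨⟨m, h.1, rfl⟩, h.2.1 i, h.2.2.1 i, fun u _ => (isLUB_pair_iff.1 hi).2.2 u⟩

namespace IsBase

theorem le_iff_le_apply (hp : IsBase B i a p) (hB : WedgeVeeClosed B) (hq : q ∈ B) :
    p ≤ q ↔ a ≤ q i := by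
  refine ⟨fun hpq => hp.1.2 ▸ hpq i, fun haq => ?_⟩
  have hinf : p ⊓ q ∈ {x | x ∈ B ∧ x i = a} :=
    ⟨hB.1 p hp.1.1 q hq, by simpa [hp.1.2] using haq⟩
  exact (hp.2 hinf).trans inf_le_right

theorem joinIrredIn_image_eval (hp : IsBase B i a p) (hB : WedgeVeeClosed B)
    (hL : ∀ t, HasBoundedJoins (L t)) (hirr : JoinIrredIn B p) :
    JoinIrredIn (Function.eval i '' B) a := by
  refine ⟨⟨p, hp.1⟩, fun hmin => hirr.2.1 fun x hx =>
    (hp.le_iff_le_apply hB hx).2 (hmin _ ⟨x, hx, rfl⟩), ?_⟩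
  rintro _ _ ⟨q, hq, rfl⟩ ⟨r, hr, rfl⟩ ⟨-, hqa, hra, ha_le⟩
  have hpq : p ⊓ q ∈ B := hB.1 p hp.1.1 q hq
  have hpr : p ⊓ r ∈ B := hB.1 p hp.1.1 r hr
  -- The join of `p ⊓ q` and `p ⊓ r` has `i`-th component at least `q i ⊔ r i = a`, so it is `p`.
  obtain ⟨y, hyB, hy⟩ :=
    hB.exists_isLUB_of_le (.pi hL) hpq hpr (inf_le_left : _ ≤ p) inf_le_left
  obtain ⟨hpqy, hpry, hy_le⟩ := isLUB_pair_iff.1 hy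
  have hqy : q i ≤ y i := (le_inf (hqa.trans_eq hp.1.2.symm) le_rfl).trans (hpqy i)
  have hry : r i ≤ y i := (le_inf (hra.trans_eq hp.1.2.symm) le_rfl).trans (hpry i)
  have hpy : p ≤ y := (hp.le_iff_le_apply hB hyB).2 (ha_le _ ⟨y, hyB, rfl⟩ hqy hry)
  have hjoin : IsLUBwithin B (p ⊓ q) (p ⊓ r) p :=
    ⟨hp.1.1, inf_le_left, inf_le_left, fun u _ hqu hru => hpy.trans (hy_le u hqu hru)⟩
  refine (hirr.2.2 _ _ hpq hpr hjoin).imp (fun h => ?_) fun h => ?_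
  · exact ((hp.le_iff_le_apply hB hq).1 (inf_eq_left.1 h.symm)).antisymm hqa
  · exact ((hp.le_iff_le_apply hB hr).1 (inf_eq_left.1 h.symm)).antisymm hra

theorem collinearIn_image_eval (hp : IsBase B i a p) (hB : WedgeVeeClosed B)
    (hL : ∀ t, HasBoundedJoins (L t)) (hirr : JoinIrredIn B p) (hq : q ∈ B) (hr : r ∈ B)
    (h : CollinearIn B p q r) : CollinearIn (Function.eval i '' B) a (q i) (r i) := by
  obtain ⟨hpq, -, hrp, m, mpq, mqr, mrp⟩ := h
  have lpq := hp.1.2 ▸ mpq.image_eval hL hB hp.1.1 hq i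
  have lqr := mqr.image_eval hL hB hq hr i
  have lrp := hp.1.2 ▸ mrp.image_eval hL hB hr hp.1.1 i
  have haq : ¬ a ≤ q i := fun h => hpq.1 ((hp.le_iff_le_apply hB hq).2 h)
  have har : ¬ a ≤ r i := fun h => hrp.2 ((hp.le_iff_le_apply hB hr).2 h)
  have hma : ¬ m i ≤ a := fun h => by
    have lqr_a : IsLUBwithin (Function.eval i '' B) (q i) (r i) a := h.antisymm lpq.2.1 ▸ lqr
    exact ((hp.joinIrredIn_image_eval hB hL hirr).2.2 _ _ ⟨q, hq, rfl⟩ ⟨r, hr, rfl⟩ lqr_a).elim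
      (fun h => haq h.le) fun h => har h.le
  have hmq : ¬ m i ≤ q i := fun h => haq (lpq.2.1.trans h)
  have hmr : ¬ m i ≤ r i := fun h => har (lpq.2.1.trans h)
  have ha : a ∈ Function.eval i '' B := ⟨p, hp.1⟩
  have hqi : q i ∈ Function.eval i '' B := ⟨q, hq, rfl⟩
  have hri : r i ∈ Function.eval i '' B := ⟨r, hr, rfl⟩
  exact ⟨lpq.incomp ha hqi hma hmq, lqr.incomp hqi hri hmq hmr, lrp.incomp hri ha hmr hma,
    m i, lpq, lqr, lrp⟩

theorem le_of_collinearIn_image_eval (hp : IsBase B i a p) (hB : WedgeVeeClosed B)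
    (hm : IsLUBwithin B q r m) (h : CollinearIn (Function.eval i '' B) a (q i) (r i)) :
    p ≤ m :=
  let ⟨_, _, _, _, laq, lqr, _⟩ := h
  (hp.le_iff_le_apply hB hm.1).2 <|
    laq.2.1.trans (lqr.2.2.2 (m i) ⟨m, hm.1, rfl⟩ (hm.2.1 i) (hm.2.2.1 i))

end IsBase

end Pi

theorem stmt14_general {ι : Type*} {L : ι → Type*} [∀ t, SemilatticeInf (L t)]
    (hL : ∀ t, HasBoundedJoins (L t)) {B : Set (∀ t, L t)} (hB : WedgeVeeClosed B)
    {i j k : ι} {a : L i} {b : L j} {c : L k} {ea eb ec : ∀ t, L t}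
    (hea : IsBase B i a ea) (heb : IsBase B j b eb) (hec : IsBase B k c ec)
    (hia : JoinIrredIn B ea) (hib : JoinIrredIn B eb) (hic : JoinIrredIn B ec)
    (h1 : JoinExistsIn B ea eb) (h2 : JoinExistsIn B eb ec) (h3 : JoinExistsIn B ec ea) :
    CollinearIn B ea eb ec ↔
      (CollinearIn (Function.eval i '' B) a (eb i) (ec i) ∧
       CollinearIn (Function.eval j '' B) (ea j) b (ec j) ∧
       CollinearIn (Function.eval k '' B) (ea k) (eb k) c) := by
  constructor
  · intro h
    exact ⟨hea.collinearIn_image_eval hB hL hia heb.1.1 hec.1.1 h,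
      (heb.collinearIn_image_eval hB hL hib hec.1.1 hea.1.1 h.rotate).rotate.rotate,
      (hec.collinearIn_image_eval hB hL hic hea.1.1 heb.1.1 h.rotate.rotate).rotate⟩
  · rintro ⟨ha, hb, hc⟩
    replace hb := hb.rotate
    replace hc := hc.rotate.rotate
    obtain ⟨_, mab⟩ := h1
    obtain ⟨_, mbc⟩ := h2
    obtain ⟨_, mca⟩ := h3
    obtain ⟨hab, hac⟩ := hea.not_le_of_collinearIn_image_eval ha
    obtain ⟨hbc, hba⟩ := heb.not_le_of_collinearIn_image_eval hb
    obtain ⟨hca, hcb⟩ := hec.not_le_of_collinearIn_image_eval hc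
    exact collinearIn_of_le_isLUBwithin ⟨hab, hba⟩ ⟨hbc, hcb⟩ ⟨hca, hac⟩ mab mbc mca
      (hea.le_of_collinearIn_image_eval hB mbc ha) (heb.le_of_collinearIn_image_eval hB mca hb)
      (hec.le_of_collinearIn_image_eval hB mab hc)

/-- Characterization of collinear triples of ∨-irreducible bases of `B` in terms of
collinearity of the relevant components in the projections `π_i(B)`, `π_j(B)`,
`π_k(B)`. -/
theorem stmt14 (L : Type*) [SemilatticeInf L] [Fintype L] (hL : ModularSemilattice L)
    (n : ℕ) (B : Set (Fin n → L)) (hB : WedgeVeeClosed B)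
    (i j k : Fin n) (a b c : L) (ea eb ec : Fin n → L)
    (hea : IsLeast {x : Fin n → L | x ∈ B ∧ x i = a} ea)
    (heb : IsLeast {x : Fin n → L | x ∈ B ∧ x j = b} eb)
    (hec : IsLeast {x : Fin n → L | x ∈ B ∧ x k = c} ec)
    (hia : JoinIrredIn B ea) (hib : JoinIrredIn B eb) (hic : JoinIrredIn B ec)
    (h1 : JoinExistsIn B ea eb) (h2 : JoinExistsIn B eb ec)
    (h3 : JoinExistsIn B ec ea) :
    CollinearIn B ea eb ec ↔
      (CollinearIn {t : L | ∃ d ∈ B, d i = t} a (eb i) (ec i) ∧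
       CollinearIn {t : L | ∃ d ∈ B, d j = t} (ea j) b (ec j) ∧
       CollinearIn {t : L | ∃ d ∈ B, d k = t} (ea k) (eb k) c) :=
  stmt14_general (fun _ => hL.1) hB hea heb hec hia hib hic h1 h2 h3
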